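/- For any n-by-n complex matrix A, d(A) = min over θ ∈ ℝ of d(Re(e^{−iθ}A)), where the minimum is attained. -/

import Mathlib

open Matrix Polynomial

noncomputable def zdi {m : Type*} [Fintype m] (A : Matrix m m ℂ) : ℕ :=
  sSup {k : ℕ | ∃ V : Matrix m (Fin k) ℂ, Vᴴ * V = 1 ∧ Vᴴ * A * V = 0}

noncomputable def matRe {m : Type*} (A : Matrix m m ℂ) : Matrix m m ℂ :=
  (2⁻¹ : ℂ) • (A + Aᴴ)

noncomputable def iNonneg {m : Type*} [Fintype m] [DecidableEq m] (M : Matrix m m ℂ) : ℕ :=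
  if hM : M.IsHermitian then (Finset.univ.filter fun i => 0 ≤ hM.eigenvalues i).card else 0

def numRange {m : Type*} [Fintype m] (A : Matrix m m ℂ) : Set ℂ :=
  {z | ∃ x : m → ℂ, star x ⬝ᵥ x = 1 ∧ star x ⬝ᵥ A.mulVec x = z}

noncomputable def arg2pi (z : ℂ) : ℝ :=
  if 0 ≤ Complex.arg z then Complex.arg z else Complex.arg z + 2 * Real.pi

def UnitSim {m : Type*} [Fintype m] [DecidableEq m] (A B : Matrix m m ℂ) : Prop :=
  ∃ U ∈ Matrix.unitaryGroup m ℂ, Uᴴ * A * U = B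

def UnitSimG {m l : Type*} [Fintype m] [DecidableEq m] [Fintype l] [DecidableEq l]
    (A : Matrix m m ℂ) (B : Matrix l l ℂ) : Prop :=
  ∃ e : m ≃ l, UnitSim (Matrix.reindex e e A) B

def superMat (n : ℕ) (w : ℕ → ℂ) : Matrix (Fin n) (Fin n) ℂ :=
  Matrix.of fun i j => if (j : ℕ) = (i : ℕ) + 1 then w (i : ℕ) else 0

def cycMat (n : ℕ) (w : ℕ → ℂ) : Matrix (Fin n) (Fin n) ℂ :=
  Matrix.of fun i j => if (j : ℕ) = ((i : ℕ) + 1) % n then w (i : ℕ) else 0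

/-!
Write `⟪x, T y⟫` for the sesquilinear form of `A`. A subspace isotropic for it is isotropic for the
form of `Re (c A)`, which gives one inequality. The other is an argument of Li and Sze: if for all
but finitely many unit `z` the form `Re (z ⟪x, T x⟫)` is nonnegative on some `k`-dimensional
subspace, then `T` has a `k`-dimensional isotropic subspace. Look at the eigenvectors of the pencil
`α T + β T*` and induct on the dimension of the space.

* If some such `x` has `⟪x, T x⟫ = 0`, it can be split off: `T x` and `T* x` are multiples of one
  vector `u`, and passing to the complement of `x` in `uᗮ` costs one dimension of isotropic
  subspace as well as of nonnegative subspace.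
* Otherwise, splitting off the eigenvectors yields a basis `v` that is orthogonal for the form, with
  `b i = ⟪v i, T (v i)⟫ ≠ 0`. Among the generic `z`, rotate by one for which the number of
  `Re (z * b i) > 0` is least. Up to scaling, every further rotation is by `±(τ + I)` with `τ` real,
  so minimality says that the slopes `Im (b i) / Re (b i)` of the positive vectors interlace those
  of the negative ones. By the converse of Cauchy interlacing (Fan and Pall), the former are the
  diagonal of a compression of the latter by an isometry `K`, and the graph of `K` is isotropic.
-/

open Filter
open scoped Topology ComplexConjugate InnerProductSpace Finset

/-! ### The converse of Cauchy interlacing -/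

/-- `K` is a real isometry compressing `diagonal q` to `diagonal p`. This is the conclusion of the
converse of Cauchy interlacing, with the numbers `p` and `q` indexed in no particular order. -/
def IsDiagonalCompression {P Q : Type*} [Fintype Q] [DecidableEq P] [DecidableEq Q]
    (p : P → ℝ) (q : Q → ℝ) (K : Matrix Q P ℝ) : Prop :=
  Kᵀ * K = 1 ∧ Kᵀ * diagonal q * K = diagonal p

theorem sum_mul_div_sub_mul_sub {ι F : Type*} [Fintype ι] [Field F] {q w : ι → F} {a b : F}
    (ha : ∀ i, q i ≠ a) (hb : ∀ i, q i ≠ b)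
    (hsum : ∑ i, w i / (q i - b) = 0) :
    ∑ i, q i * (w i / ((q i - a) * (q i - b))) = a * ∑ i, w i / ((q i - a) * (q i - b)) := by
  rw [← zero_add (a * _), ← hsum, Finset.mul_sum, ← Finset.sum_add_distrib]
  refine Finset.sum_congr rfl fun i _ => ?_
  have hai : q i - a ≠ 0 := sub_ne_zero.2 (ha i)
  have hbi : q i - b ≠ 0 := sub_ne_zero.2 (hb i)
  field_simp
  ring

section

variable {P Q : Type*} [Fintype Q] [DecidableEq P]

theorem exists_isDiagonalCompression_of_sum_div_eq_zero [DecidableEq Q] [Nonempty Q]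
    {p : P → ℝ} {q w : Q → ℝ} (hp : Function.Injective p) (hqp : ∀ i j, q i ≠ p j)
    (hw : ∀ i, 0 < w i) (hsum : ∀ j, ∑ i, w i / (q i - p j) = 0) :
    ∃ K : Matrix Q P ℝ, IsDiagonalCompression p q K := by
  set s : P → P → ℝ := fun j l => ∑ i, w i / ((q i - p j) * (q i - p l)) with hs
  have hq_s (j l : P) : ∑ i, q i * (w i / ((q i - p j) * (q i - p l))) = p j * s j l :=
    sum_mul_div_sub_mul_sub (hqp · j) (hqp · l) (hsum l)
  have hs_pos (j : P) : 0 < s j j :=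
    Finset.sum_pos (fun i _ => div_pos (hw i) (mul_self_pos.2 (sub_ne_zero.2 (hqp i j))))
      Finset.univ_nonempty
  have hs_off (j l : P) (hjl : j ≠ l) : s j l = 0 := by
    have hswap : s l j = s j l := by simp only [hs, mul_comm]
    have heq : p j * s j l = p l * s j l := by
      rw [← hq_s j l, ← hswap, ← hq_s l j]
      simp only [mul_comm (q _ - p j)]
    exact (mul_eq_mul_right_iff.1 heq).resolve_left (hp.ne hjl)
  let K : Matrix Q P ℝ := of fun i j => √(w i) / (√(s j j) * (q i - p j))
  have hK (i : Q) (j l : P) :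
      K i j * K i l = (√(s j j) * √(s l l))⁻¹ * (w i / ((q i - p j) * (q i - p l))) := by
    simp only [K, of_apply]
    rw [div_mul_div_comm, Real.mul_self_sqrt (hw i).le, mul_mul_mul_comm, inv_mul_eq_div, div_div,
      mul_comm (√_ * √_)]
  have hgram_apply (j l : P) : (Kᵀ * K) j l = (√(s j j) * √(s l l))⁻¹ * s j l := by
    simp only [mul_apply, transpose_apply, hK, ← Finset.mul_sum, hs]
  have hgram : Kᵀ * K = 1 := by
    ext j l
    rw [hgram_apply]
    rcases eq_or_ne j l with rfl | hjl
    · rw [Real.mul_self_sqrt (hs_pos j).le, one_apply_eq, inv_mul_cancel₀ (hs_pos j).ne']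
    · rw [one_apply_ne hjl, hs_off j l hjl, mul_zero]
  refine ⟨K, hgram, ?_⟩
  ext j l
  calc (Kᵀ * diagonal q * K) j l = ∑ i, K i j * q i * K i l := by
        rw [mul_apply]; simp only [mul_diagonal, transpose_apply]
    _ = ∑ i, (√(s j j) * √(s l l))⁻¹ * (q i * (w i / ((q i - p j) * (q i - p l)))) :=
        Finset.sum_congr rfl fun i _ => by rw [mul_right_comm, hK, mul_assoc, mul_comm (_ / _)]
    _ = p j * (Kᵀ * K) j l := by rw [← Finset.mul_sum, hq_s, mul_left_comm, hgram_apply]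
    _ = diagonal p j l := by rw [hgram, diagonal_apply, one_apply, mul_ite, mul_one, mul_zero]

theorem isCompact_setOf_transpose_mul_self_eq_one :
    IsCompact {K : Matrix Q P ℝ | Kᵀ * K = 1} := by
  have hcube : IsCompact (Set.univ.pi fun _ => Set.univ.pi fun _ => Set.Icc (-1) 1 :
      Set (Q → P → ℝ)) :=
    isCompact_univ_pi fun _ => isCompact_univ_pi fun _ => isCompact_Icc
  have hclosed : IsClosed {K : Matrix Q P ℝ | Kᵀ * K = 1} :=
    isClosed_eq (by fun_prop) continuous_const
  refine hcube.of_isClosed_subset hclosed ?_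
  intro (K : Matrix Q P ℝ) (hK : Kᵀ * K = 1) i _ j _
  have hcol : ∑ i, K i j * K i j = 1 := by
    simpa only [mul_apply, transpose_apply, one_apply_eq] using congrFun₂ hK j j
  exact abs_le.1 (abs_le_one_iff_mul_self_le_one.2 (hcol ▸ Finset.single_le_sum
    (f := fun i => K i j * K i j) (fun i _ => mul_self_nonneg (K i j)) (Finset.mem_univ i)))

theorem isClosed_setOf_exists_isDiagonalCompression [DecidableEq Q] :
    IsClosed {pq : (P → ℝ) × (Q → ℝ) | ∃ K, IsDiagonalCompression pq.1 pq.2 K} := by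
  let isometries : Set (Matrix Q P ℝ) := {K | Kᵀ * K = 1}
  have : CompactSpace isometries :=
    isCompact_iff_compactSpace.1 isCompact_setOf_transpose_mul_self_eq_one
  have hclosed : IsClosed {x : ((P → ℝ) × (Q → ℝ)) × isometries |
      (x.2 : Matrix Q P ℝ)ᵀ * diagonal x.1.2 * (x.2 : Matrix Q P ℝ) = diagonal x.1.1} :=
    isClosed_eq (by fun_prop) (by fun_prop)
  convert isClosedMap_fst_of_compactSpace _ hclosed using 1
  ext pq
  constructor
  · rintro ⟨K, hK, hKq⟩
    exact ⟨(pq, ⟨K, hK⟩), hKq, rfl⟩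
  · rintro ⟨⟨_, K⟩, hKq, rfl⟩
    exact ⟨K, K.2, hKq⟩

end

theorem sum_eval_div_prod_sub_succAbove_eq_zero {F : Type*} [Field F] {k : ℕ}
    {q : Fin (k + 1) → F} (hq : Function.Injective q) {g : F[X]} (hg : g.natDegree < k) :
    ∑ i, g.eval (q i) / ∏ j, (q i - q (i.succAbove j)) = 0 := by
  have hdeg : g.degree < (Finset.univ : Finset (Fin (k + 1))).card := by
    rw [Finset.card_univ, Fintype.card_fin]
    exact g.degree_le_natDegree.trans_lt (by exact_mod_cast hg.trans k.lt_succ_self)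
  have hcoeff := Lagrange.coeff_eq_sum hq.injOn hdeg
  rw [Finset.card_univ, Fintype.card_fin, Nat.add_sub_cancel,
    coeff_eq_zero_of_natDegree_lt hg] at hcoeff
  rw [hcoeff]
  refine Finset.sum_congr rfl fun i _ => ?_
  rw [← Finset.compl_singleton, ← Fin.image_succAbove_univ,
    Finset.prod_image Fin.succAbove_right_injective.injOn]

theorem sum_prod_div_prod_div_sub_eq_zero {F : Type*} [Field F] {k : ℕ} {p : Fin k → F}
    {q : Fin (k + 1) → F} (hq : Function.Injective q) (hqp : ∀ i j, q i ≠ p j) (l : Fin k) :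
    ∑ i, (∏ j, (q i - p j) / (q i - q (i.succAbove j))) / (q i - p l) = 0 := by
  have hdeg : (∏ j ∈ Finset.univ.erase l, (X - C (p j))).natDegree < k := by
    rw [natDegree_finsetProd_X_sub_C_eq_card, Finset.card_erase_of_mem (Finset.mem_univ l),
      Finset.card_univ, Fintype.card_fin]
    exact Nat.sub_lt l.pos one_pos
  rw [← sum_eval_div_prod_sub_succAbove_eq_zero hq hdeg]
  refine Finset.sum_congr rfl fun i _ => ?_
  rw [Finset.prod_div_distrib, ← Finset.mul_prod_erase _ _ (Finset.mem_univ l), eval_prod,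
    div_right_comm, mul_div_cancel_left₀ _ (sub_ne_zero.2 (hqp i l))]
  simp only [eval_sub, eval_X, eval_C]

theorem exists_isDiagonalCompression_of_lt {k : ℕ} {p : Fin k → ℝ} {q : Fin (k + 1) → ℝ}
    (hqp : ∀ j, q j.castSucc < p j) (hpq : ∀ j, p j < q j.succ) :
    ∃ K : Matrix (Fin (k + 1)) (Fin k) ℝ, IsDiagonalCompression p q K := by
  have hq : StrictMono q := Fin.strictMono_iff_lt_succ.2 fun j => (hqp j).trans (hpq j)
  have hp : StrictMono p := fun j l hjl =>
    (hpq j).trans_le ((hq.monotone (Fin.succ_le_castSucc_iff.2 hjl)).trans (hqp l).le)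
  have hpos : ∀ i j, 0 < (q i - p j) / (q i - q (i.succAbove j)) := fun i j => by
    rcases lt_or_ge j.castSucc i with hji | hij
    · rw [Fin.succAbove_of_castSucc_lt _ _ hji]
      exact div_pos (sub_pos.2 ((hpq j).trans_le (hq.monotone (Fin.castSucc_lt_iff_succ_le.1 hji))))
        (sub_pos.2 (hq hji))
    · rw [Fin.succAbove_of_le_castSucc _ _ hij]
      have hlt : q i < p j := (hq.monotone hij).trans_lt (hqp j)
      exact div_pos_of_neg_of_neg (sub_neg.2 hlt) (sub_neg.2 (hlt.trans (hpq j)))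
  have hne : ∀ i j, q i ≠ p j := fun i j h => by simpa [h] using hpos i j
  exact exists_isDiagonalCompression_of_sum_div_eq_zero hp.injective hne
    (fun i => Finset.prod_pos fun j _ => hpos i j)
    (sum_prod_div_prod_div_sub_eq_zero hq.injective hne)

theorem exists_isDiagonalCompression_of_le {k : ℕ} {p : Fin k → ℝ} {q : Fin (k + 1) → ℝ}
    (hqp : ∀ j, q j.castSucc ≤ p j) (hpq : ∀ j, p j ≤ q j.succ) :
    ∃ K : Matrix (Fin (k + 1)) (Fin k) ℝ, IsDiagonalCompression p q K := by
  let perturbed (ε : ℝ) : (Fin k → ℝ) × (Fin (k + 1) → ℝ) :=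
    (fun j => p j + (2 * j + 1) * ε, fun i => q i + 2 * i * ε)
  have hcont : Continuous perturbed := by fun_prop
  have hlim : Filter.Tendsto perturbed (𝓝[>] 0) (𝓝 (p, q)) := by
    simpa [perturbed] using (hcont.tendsto 0).mono_left nhdsWithin_le_nhds
  have hev : ∀ᶠ ε in 𝓝[>] 0, ∃ K, IsDiagonalCompression (perturbed ε).1 (perturbed ε).2 K := by
    filter_upwards [self_mem_nhdsWithin] with ε (hε : 0 < ε)
    refine exists_isDiagonalCompression_of_lt (fun j => ?_) fun j => ?_
    · simp only [perturbed, Fin.val_castSucc]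
      linarith [hqp j]
    · simp only [perturbed, Fin.val_succ, Nat.cast_add, Nat.cast_one]
      linarith [hpq j]
  exact (isClosed_setOf_exists_isDiagonalCompression.mem_of_tendsto hlim hev :)

theorem IsDiagonalCompression.trans {P Q R : Type*} [Fintype Q] [Fintype R] [DecidableEq P]
    [DecidableEq Q] [DecidableEq R] {p : P → ℝ} {q : Q → ℝ} {r : R → ℝ} {K : Matrix Q P ℝ}
    {L : Matrix R Q ℝ} (hK : IsDiagonalCompression p q K) (hL : IsDiagonalCompression q r L) :
    IsDiagonalCompression p r (L * K) := by
  constructor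
  · rw [transpose_mul, Matrix.mul_assoc, ← Matrix.mul_assoc Lᵀ, hL.1, Matrix.one_mul, hK.1]
  · rw [← hK.2, ← hL.2]
    simp only [transpose_mul, Matrix.mul_assoc]

theorem exists_isDiagonalCompression_of_interlacing {k m : ℕ} {p : Fin k → ℝ}
    {q : Fin (k + m) → ℝ} (hp : Monotone p) (hq : Monotone q)
    (hqp : ∀ j, q (j.castAdd m) ≤ p j) (hpq : ∀ j, p j ≤ q (j.addNat m)) :
    ∃ K : Matrix (Fin (k + m)) (Fin k) ℝ, IsDiagonalCompression p q K := by
  induction m with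
  | zero =>
    obtain rfl : p = q := funext fun j => le_antisymm (hpq j) (hqp j)
    exact ⟨1, by rw [transpose_one, one_mul], by rw [transpose_one, one_mul, mul_one]⟩
  | succ m ih =>
    let r : Fin (k + m) → ℝ := fun i =>
      if h : (i : ℕ) < k then min (p ⟨i, h⟩) (q i.succ) else q i.succ
    have hqr (i : Fin (k + m)) : q i.castSucc ≤ r i := by
      have hsucc : q i.castSucc ≤ q i.succ := hq i.castSucc_le_succ
      simp only [r]
      split_ifs with h
      · exact le_min (hqp ⟨i, h⟩) hsucc
      · exact hsucc
    have hrq (i : Fin (k + m)) : r i ≤ q i.succ := by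
      simp only [r]
      split_ifs
      · exact min_le_right _ _
      · exact le_rfl
    have hr : Monotone r := fun i j hij => by
      rcases hij.eq_or_lt with rfl | hlt
      · exact le_rfl
      · exact (hrq i).trans ((hq (Fin.succ_le_castSucc_iff.2 hlt)).trans (hqr j))
    have hrp (j : Fin k) : r (j.castAdd m) ≤ p j := by
      simp only [r, Fin.val_castAdd, j.2, dif_pos]
      exact min_le_left _ _
    have hpr (j : Fin k) : p j ≤ r (j.addNat m) := by
      simp only [r]
      split_ifs with h
      · exact le_min (hp (Nat.le_add_right (j : ℕ) m)) (hpq j)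
      · exact hpq j
    obtain ⟨K, hK⟩ := ih hr hrp hpr
    obtain ⟨L, hL⟩ := exists_isDiagonalCompression_of_le hqr hrq
    exact ⟨L * K, hK.trans hL⟩

theorem le_of_eventually_card_filter_lt_le {α : Type*} [LinearOrder α] [DenselyOrdered α]
    {k l s : ℕ} {p : Fin k → α} {q : Fin l → α}
    (hp : Monotone p) (hq : Monotone q)
    (hcard : ∀ᶠ τ in cofinite, #{j | p j < τ} ≤ #{i | q i < τ} + s)
    {i : Fin l} {j : Fin k} (hij : (i : ℕ) + s ≤ j) : q i ≤ p j := by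
  by_contra! hlt
  obtain ⟨τ, ⟨hpτ, hτq⟩, hτ⟩ :=
    ((frequently_cofinite_iff_infinite.2 (Set.Ioo_infinite hlt)).and_eventually hcard).exists
  have hj := (Tuple.lt_card_lt_iff_apply_lt_of_monotone hp).2 hpτ
  have hi := (Tuple.lt_card_lt_iff_apply_lt_of_monotone hq).not.2 hτq.not_gt
  omega

theorem exists_equiv_monotone {ι α : Type*} [Fintype ι] [LinearOrder α] {k : ℕ} (f : ι → α)
    (hk : Fintype.card ι = k) : ∃ e : Fin k ≃ ι, Monotone (f ∘ e) :=
  let e := (Fintype.equivFinOfCardEq hk).symm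
  ⟨(Tuple.sort (f ∘ e)).trans e, Tuple.monotone_sort (f ∘ e)⟩

theorem exists_isDiagonalCompression_of_eventually_card_filter_lt_le {P Q : Type*} [Fintype P]
    [Fintype Q] [DecidableEq P] [DecidableEq Q] {p : P → ℝ} {q : Q → ℝ}
    (h : ∀ᶠ τ in cofinite, #{j | p j < τ} ≤ #{i | q i < τ} ∧
      #{i | q i < τ} + Fintype.card P ≤ #{j | p j < τ} + Fintype.card Q) :
    ∃ K : Matrix Q P ℝ, IsDiagonalCompression p q K := by
  obtain ⟨m, hm⟩ : ∃ m, Fintype.card Q = Fintype.card P + m := by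
    obtain ⟨τ, hτ⟩ := h.exists
    exact Nat.exists_eq_add_of_le (by omega)
  obtain ⟨a, ha⟩ := exists_equiv_monotone p rfl
  obtain ⟨b, hb⟩ := exists_equiv_monotone q hm
  have hcard_a (τ : ℝ) : #{j | (p ∘ a) j < τ} = #{j | p j < τ} :=
    Finset.card_equiv a fun j => by simp only [Finset.mem_filter_univ, Function.comp_apply]
  have hcard_b (τ : ℝ) : #{i | (q ∘ b) i < τ} = #{i | q i < τ} :=
    Finset.card_equiv b fun i => by simp only [Finset.mem_filter_univ, Function.comp_apply]
  obtain ⟨K, hgram, hdiag⟩ := exists_isDiagonalCompression_of_interlacing ha hb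
    (fun j => le_of_eventually_card_filter_lt_le (s := 0) ha hb
      (h.mono fun τ hτ => by rw [hcard_a, hcard_b]; exact hτ.1) le_rfl)
    (fun j => le_of_eventually_card_filter_lt_le (s := m) hb ha
      (h.mono fun τ hτ => by rw [hcard_a, hcard_b]; omega) le_rfl)
  refine ⟨K.submatrix b.symm a.symm, ?_, ?_⟩
  · rw [transpose_submatrix, submatrix_mul_equiv, hgram, submatrix_one_equiv]
  · have hq : diagonal q = (diagonal (q ∘ b)).submatrix b.symm b.symm := by
      rw [submatrix_diagonal_equiv, Function.comp_assoc, b.self_comp_symm, Function.comp_id]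
    rw [hq, transpose_submatrix, submatrix_mul_equiv, submatrix_mul_equiv, hdiag,
      submatrix_diagonal_equiv, Function.comp_assoc, a.self_comp_symm, Function.comp_id]

/-! ### Generic rotations -/

instance : Infinite Circle :=
  Circle.argEquiv.infinite_iff.2 (Set.Ioc_infinite (by linarith [Real.pi_pos])).to_subtype

theorem exists_and_eventually_cofinite_le {α : Type*} [Infinite α] {p : α → Prop}
    (hp : ∀ᶠ x in cofinite, p x) (f : α → ℕ) :
    ∃ x₀, p x₀ ∧ ∀ᶠ x in cofinite, f x₀ ≤ f x := by
  obtain ⟨x₀, hx₀, hmin⟩ := exists_minimalFor_of_wellFoundedLT p f hp.exists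
  exact ⟨x₀, hx₀, hp.mono fun x hx => le_of_not_gt fun hlt => hlt.not_ge (hmin hx hlt.le)⟩

theorem eventually_cofinite_circle_mul_add_conj_mul_ne_zero {a b : ℂ} (h : a ≠ 0 ∨ b ≠ 0) :
    ∀ᶠ z : Circle in cofinite, (z : ℂ) * a + conj (z : ℂ) * b ≠ 0 := by
  have hp : C a * X ^ 2 + C b ≠ 0 := fun hp => by
    have h0 : b = 0 := by simpa using congrArg (coeff · 0) hp
    have h2 : a = 0 := by simpa [coeff_C] using congrArg (coeff · 2) hp
    exact h.elim (· h2) (· h0)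
  filter_upwards [Circle.coe_injective.tendsto_cofinite.eventually
    (finite_setOfPred_isRoot hp).eventually_cofinite_notMem] with z hz hzero
  refine hz ?_
  have hconj : (z : ℂ) * conj (z : ℂ) = 1 := by
    rw [← Circle.coe_inv_eq_conj, ← Circle.coe_mul, mul_inv_cancel, Circle.coe_one]
  simp only [IsRoot.def, eval_add, eval_mul, eval_C, eval_pow, eval_X]
  linear_combination z * hzero - b * hconj

theorem eventually_cofinite_circle_re_mul_ne_zero {a : ℂ} (ha : a ≠ 0) :
    ∀ᶠ z : Circle in cofinite, ((z : ℂ) * a).re ≠ 0 := by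
  filter_upwards [eventually_cofinite_circle_mul_add_conj_mul_ne_zero
    (.inl ha : a ≠ 0 ∨ conj a ≠ 0)] with z hz hre
  rw [← map_mul, Complex.add_conj, hre, mul_zero, Complex.ofReal_zero] at hz
  exact hz rfl

theorem eventually_cofinite_add_I_of_circle {p : ℂ → Prop}
    (hp : ∀ r : ℝ, 0 < r → ∀ c, p c → p (r • c)) (h : ∀ᶠ z : Circle in cofinite, p z) :
    ∀ᶠ τ : ℝ in cofinite, p (τ + Complex.I) := by
  have hne (τ : ℝ) : (τ + Complex.I : ℂ) ≠ 0 := fun h0 => by simpa using congrArg Complex.im h0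
  let f (τ : ℝ) : Circle := ⟨_, mem_sphere_zero_iff_norm.2 (NormedSpace.norm_normalize (hne τ))⟩
  have hf (τ : ℝ) : ‖(τ + Complex.I : ℂ)‖ • (f τ : ℂ) = τ + Complex.I :=
    NormedSpace.norm_smul_normalize _
  have hinj : Function.Injective f := fun σ τ hστ => by
    have him (ρ : ℝ) : ‖(ρ + Complex.I : ℂ)‖ * (f ρ : ℂ).im = 1 := by
      simpa using congrArg Complex.im (hf ρ)
    have hnorm : ‖(σ + Complex.I : ℂ)‖ = ‖(τ + Complex.I : ℂ)‖ :=
      mul_right_cancel₀ (right_ne_zero_of_mul_eq_one (him τ)) (by rw [him, ← hστ, him])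
    exact Complex.ofReal_injective (add_right_cancel ((hf σ).symm.trans (hnorm ▸ hστ ▸ hf τ)))
  filter_upwards [hinj.tendsto_cofinite.eventually h] with τ hτ
  exact hf τ ▸ hp _ (norm_pos_iff.2 (hne τ)) _ hτ

theorem re_add_I_mul {c : ℂ} (hc : c.re ≠ 0) (τ : ℝ) :
    ((τ + Complex.I) * c).re = (τ - c.im / c.re) * c.re := by
  rw [sub_mul, div_mul_cancel₀ _ hc, Complex.mul_re]
  simp only [Complex.add_re, Complex.add_im, Complex.ofReal_re, Complex.ofReal_im, Complex.I_re,
    Complex.I_im, add_zero, zero_add, one_mul]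

theorem card_filter_subtype_add_card_filter_subtype_not {ι : Type*} [Fintype ι] (r s : ι → Prop)
    [DecidablePred r] [DecidablePred s] :
    #{i : {i // r i} | s i} + #{i : {i // ¬ r i} | s i} = #{i | s i} := by
  simp only [Finset.card_filter]
  exact Fintype.sum_subtype_add_sum_subtype r fun i => if s i then 1 else 0

theorem eventually_card_filter_slope_lt_le {ι : Type*} [Fintype ι] {b : ι → ℂ}
    (hb : ∀ i, (b i).re ≠ 0)
    (hmin : ∀ᶠ z : Circle in cofinite, #{i | 0 < (b i).re} ≤ #{i | 0 < ((z : ℂ) * b i).re}) :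
    ∀ᶠ τ in cofinite,
      #{j : {i // 0 < (b i).re} | (b j).im / (b j).re < τ} ≤
        #{j : {i // ¬ 0 < (b i).re} | (b j).im / (b j).re < τ} ∧
      #{j : {i // ¬ 0 < (b i).re} | (b j).im / (b j).re < τ} +
        Fintype.card {i // 0 < (b i).re} ≤
        #{j : {i // 0 < (b i).re} | (b j).im / (b j).re < τ} +
          Fintype.card {i // ¬ 0 < (b i).re} := by
  have hscale (r : ℝ) (hr : 0 < r) (c : ℂ) (i : ι) : 0 < (r • c * b i).re ↔ 0 < (c * b i).re := by
    rw [smul_mul_assoc, Complex.smul_re, smul_eq_mul, mul_pos_iff_of_pos_left hr]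
  have hpos := eventually_cofinite_add_I_of_circle
    (p := fun c => #{i | 0 < (b i).re} ≤ #{i | 0 < (c * b i).re} ∧
      #{i | 0 < (b i).re} ≤ #{i | 0 < (-c * b i).re})
    (fun r hr c => by simp only [← smul_neg, hscale r hr, imp_self])
    (hmin.and (neg_injective.tendsto_cofinite.eventually hmin))
  have hne : ∀ᶠ τ : ℝ in cofinite, ∀ i, τ ≠ (b i).im / (b i).re :=
    eventually_all.2 fun i => eventually_cofinite_ne _
  filter_upwards [hpos, hne] with τ ⟨hle, hle_neg⟩ hτ
  have hP (i : {i // 0 < (b i).re}) :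
      (0 < ((τ + Complex.I) * b i).re ↔ (b i).im / (b i).re < τ) ∧
        (0 < (-(τ + Complex.I) * b i).re ↔ ¬ (b i).im / (b i).re < τ) := by
    rw [neg_mul, Complex.neg_re, re_add_I_mul (hb i), ← neg_mul, neg_sub,
      mul_pos_iff_of_pos_right i.2, mul_pos_iff_of_pos_right i.2, sub_pos, sub_pos, not_lt,
      (hτ i).le_iff_lt]
    exact ⟨.rfl, .rfl⟩
  have hQ (i : {i // ¬ 0 < (b i).re}) :
      (0 < ((τ + Complex.I) * b i).re ↔ ¬ (b i).im / (b i).re < τ) ∧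
        (0 < (-(τ + Complex.I) * b i).re ↔ (b i).im / (b i).re < τ) := by
    have hi : 0 < -(b i).re := neg_pos.2 ((not_lt.1 i.2).lt_of_ne (hb i))
    rw [neg_mul, Complex.neg_re, re_add_I_mul (hb i), ← mul_neg, ← neg_mul_neg, neg_sub,
      mul_pos_iff_of_pos_right hi, mul_pos_iff_of_pos_right hi, sub_pos, sub_pos, not_lt,
      (hτ i).le_iff_lt]
    exact ⟨.rfl, .rfl⟩
  rw [← Fintype.card_subtype,
    ← card_filter_subtype_add_card_filter_subtype_not (fun i => 0 < (b i).re)] at hle hle_neg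
  simp only [hP, hQ] at hle hle_neg
  have hcard (r : ι → Prop) [DecidablePred r] := Finset.card_filter_add_card_filter_not
    (s := .univ) fun i : {i // r i} => (b i).im / (b i).re < τ
  have hcardP := hcard fun i => 0 < (b i).re
  have hcardQ := hcard fun i => ¬ 0 < (b i).re
  rw [Finset.card_univ] at hcardP hcardQ
  omega

/-! ### Isotropic subspaces and compressions -/

section

variable {E : Type*} [NormedAddCommGroup E] [InnerProductSpace ℂ E]

/-- The subspace `W` is isotropic for the sesquilinear form `⟪x, T y⟫`, which need not be Hermitian.
A `k`-dimensional isotropic subspace is a `k`-by-`k` zero matrix dilating to `T`. -/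
def IsIsotropic (T : E →ₗ[ℂ] E) (W : Submodule ℂ E) : Prop :=
  ∀ x ∈ W, ∀ y ∈ W, ⟪x, T y⟫_ℂ = 0

/-- The form `Re ⟪x, T x⟫` is nonnegative on a subspace of dimension at least `k`: by
Courant–Fischer, the real part of `T` has at least `k` nonnegative eigenvalues. -/
def HasNonnegSubspace (T : E →ₗ[ℂ] E) (k : ℕ) : Prop :=
  ∃ W : Submodule ℂ E, k ≤ Module.finrank ℂ W ∧ ∀ x ∈ W, 0 ≤ (⟪x, T x⟫_ℂ).re

theorem IsIsotropic.span {T : E →ₗ[ℂ] E} {s : Set E} (h : ∀ x ∈ s, ∀ y ∈ s, ⟪x, T y⟫_ℂ = 0) :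
    IsIsotropic T (Submodule.span ℂ s) := by
  intro x hx y hy
  induction hx, hy using Submodule.span_induction₂ with
  | mem_mem x y hx hy => exact h x hx y hy
  | zero_left => rw [inner_zero_left]
  | zero_right => rw [map_zero, inner_zero_right]
  | add_left x y z _ _ _ hx hy => rw [inner_add_left, hx, hy, add_zero]
  | add_right x y z _ _ _ hy hz => rw [map_add, inner_add_right, hy, hz, add_zero]
  | smul_left c x y _ _ h => rw [inner_smul_left, h, mul_zero]
  | smul_right c x y _ _ h => rw [map_smul, inner_smul_right, h, mul_zero]

theorem isIsotropic_smul_iff {T : E →ₗ[ℂ] E} {W : Submodule ℂ E} {c : ℂ} (hc : c ≠ 0) :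
    IsIsotropic (c • T) W ↔ IsIsotropic T W := by
  simp only [IsIsotropic, LinearMap.smul_apply, inner_smul_right, mul_eq_zero, hc, false_or]

theorem HasNonnegSubspace.mono {T : E →ₗ[ℂ] E} {k l : ℕ} (hkl : k ≤ l)
    (h : HasNonnegSubspace T l) : HasNonnegSubspace T k :=
  let ⟨W, hl, hW⟩ := h
  ⟨W, hkl.trans hl, hW⟩

variable [FiniteDimensional ℂ E]

/-- The compression of `T` to `M`, i.e. the restriction of `T` to `M` followed by the orthogonal
projection onto `M`. -/
noncomputable def compression (T : E →ₗ[ℂ] E) (M : Submodule ℂ E) : M →ₗ[ℂ] M :=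
  M.orthogonalProjectionOnto.toLinearMap ∘ₗ T ∘ₗ M.subtype

theorem inner_compression (T : E →ₗ[ℂ] E) (M : Submodule ℂ E) (x y : M) :
    ⟪x, compression T M y⟫_ℂ = ⟪(x : E), T y⟫_ℂ :=
  Submodule.inner_orthogonalProjectionOnto_eq_of_mem_left x (T y)

theorem adjoint_compression (T : E →ₗ[ℂ] E) (M : Submodule ℂ E) :
    (compression T M).adjoint = compression T.adjoint M := by
  refine ((LinearMap.eq_adjoint_iff _ _).2 fun x y => ?_).symm
  rw [inner_compression, ← inner_conj_symm, inner_compression, LinearMap.adjoint_inner_right,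
    inner_conj_symm]

theorem compression_smul (c : ℂ) (T : E →ₗ[ℂ] E) (M : Submodule ℂ E) :
    compression (c • T) M = c • compression T M := by
  rw [compression, LinearMap.smul_comp, LinearMap.comp_smul, compression]

theorem IsIsotropic.map_subtype {T : E →ₗ[ℂ] E} {M : Submodule ℂ E} {W : Submodule ℂ M}
    (hW : IsIsotropic (compression T M) W) : IsIsotropic T (W.map M.subtype) := by
  rintro _ ⟨x, hx, rfl⟩ _ ⟨y, hy, rfl⟩
  exact inner_compression T M x y ▸ hW x hx y hy

theorem hasNonnegSubspace_compression {T : E →ₗ[ℂ] E} {M W : Submodule ℂ E} (hWM : W ≤ M)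
    (hW : ∀ x ∈ W, 0 ≤ (⟪x, T x⟫_ℂ).re) :
    HasNonnegSubspace (compression T M) (Module.finrank ℂ W) :=
  ⟨W.comap M.subtype, (Submodule.comapSubtypeEquivOfLe hWM).finrank_eq.ge,
    fun x hx => inner_compression T M x x ▸ hW x hx⟩

theorem finrank_le_finrank_inf_orthogonal_add (W K : Submodule ℂ E) :
    Module.finrank ℂ W ≤ Module.finrank ℂ ↥(W ⊓ Kᗮ) + Module.finrank ℂ K := by
  have hsup := Submodule.finrank_sup_add_finrank_inf_eq W Kᗮ
  have hK := K.finrank_add_finrank_orthogonal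
  have hle := (W ⊔ Kᗮ).finrank_le
  omega

theorem IsIsotropic.exists_finrank_eq_add_one {T : E →ₗ[ℂ] E} {M : Submodule ℂ E}
    {W : Submodule ℂ M} {x : E} (hW : IsIsotropic (compression T M) W) (hx : x ∉ M)
    (hxT : ⟪x, T x⟫_ℂ = 0) (hxM : ∀ y ∈ M, ⟪y, T x⟫_ℂ = 0 ∧ ⟪x, T y⟫_ℂ = 0) :
    ∃ W' : Submodule ℂ E, Module.finrank ℂ W' = Module.finrank ℂ W + 1 ∧ IsIsotropic T W' := by
  have hWM : W.map M.subtype ≤ M := M.map_subtype_le W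
  have hxW : x ∉ W.map M.subtype := fun h => hx (hWM h)
  refine ⟨W.map M.subtype ⊔ ℂ ∙ x, ?_, ?_⟩
  · rw [Submodule.finrank_sup_span_singleton hxW, Submodule.finrank_map_subtype_eq]
  · rw [← Submodule.span_eq (W.map M.subtype), ← Submodule.span_union]
    refine .span ?_
    rintro y (hy | rfl) z (hz | rfl)
    · exact hW.map_subtype y hy z hz
    · exact (hxM y (hWM hy)).1
    · exact (hxM z (hWM hz)).2
    · exact hxT

end

/-! ### Eigenvectors of the pencil -/

section

variable {E : Type*} [NormedAddCommGroup E] [InnerProductSpace ℂ E] [FiniteDimensional ℂ E]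

/-- An eigenvector of the pencil of `T` and its adjoint. The eigenvalue is the projective pair
`(α, β)`, so that the kernel vectors of `T` and of its adjoint are included. -/
def IsPencilEigenvector (T : E →ₗ[ℂ] E) (x : E) : Prop :=
  x ≠ 0 ∧ ∃ α β : ℂ, (α ≠ 0 ∨ β ≠ 0) ∧ α • T x + β • T.adjoint x = 0

theorem exists_isPencilEigenvector [Nontrivial E] (T : E →ₗ[ℂ] E) :
    ∃ x, IsPencilEigenvector T x := by
  by_cases hT : Function.Injective T
  · let S := (LinearEquiv.ofInjectiveEndo T hT).symm.toLinearMap ∘ₗ T.adjoint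
    obtain ⟨μ, hμ⟩ := Module.End.exists_eigenvalue S
    obtain ⟨x, hx⟩ := hμ.exists_hasEigenvector
    refine ⟨x, hx.2, μ, -1, .inr (neg_ne_zero.2 one_ne_zero), ?_⟩
    have hTS : T (S x) = T.adjoint x := (LinearEquiv.ofInjectiveEndo T hT).apply_symm_apply _
    rw [← hTS, hx.apply_eq_smul, map_smul, neg_one_smul, add_neg_cancel]
  · rw [← LinearMap.ker_eq_bot, Submodule.eq_bot_iff] at hT
    push Not at hT
    obtain ⟨x, hTx, hx⟩ := hT
    refine ⟨x, hx, 1, 0, .inl one_ne_zero, ?_⟩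
    rw [LinearMap.mem_ker.1 hTx, smul_zero, zero_smul, add_zero]

theorem IsPencilEigenvector.exists_eq_smul {T : E →ₗ[ℂ] E} {x : E} (h : IsPencilEigenvector T x) :
    ∃ (u : E) (a b : ℂ), (a ≠ 0 ∨ b ≠ 0) ∧ T x = a • u ∧ T.adjoint x = b • u := by
  obtain ⟨-, α, β, hα | hβ, hαβ⟩ := h
  · refine ⟨T.adjoint x, -(α⁻¹ * β), 1, .inr one_ne_zero, ?_, (one_smul _ _).symm⟩
    rw [neg_smul, mul_smul, ← smul_neg, ← eq_neg_of_add_eq_zero_left hαβ, inv_smul_smul₀ hα]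
  · refine ⟨T x, 1, -(β⁻¹ * α), .inl one_ne_zero, (one_smul _ _).symm, ?_⟩
    rw [neg_smul, mul_smul, ← smul_neg, ← eq_neg_of_add_eq_zero_right hαβ, inv_smul_smul₀ hβ]

theorem inner_apply_eq_zero_of_mem_orthogonal {T : E →ₗ[ℂ] E} {x y u : E} {a b : ℂ}
    (hTx : T x = a • u) (hTx' : T.adjoint x = b • u) (hy : y ∈ (ℂ ∙ u)ᗮ) :
    ⟪y, T x⟫_ℂ = 0 ∧ ⟪x, T y⟫_ℂ = 0 := by
  have hyu : ⟪y, u⟫_ℂ = 0 := Submodule.mem_orthogonal_singleton_iff_inner_left.1 hy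
  refine ⟨by rw [hTx, inner_smul_right, hyu, mul_zero], ?_⟩
  rw [← LinearMap.adjoint_inner_left, hTx', inner_smul_left, inner_eq_zero_symm.1 hyu, mul_zero]

theorem eq_zero_of_forall_nonneg_add_re_mul {q : ℝ} {w : ℂ} (h : ∀ c : ℂ, 0 ≤ q + (c * w).re) :
    w = 0 := by
  by_contra hw
  have hneg := h (-(q + 1) / w)
  rw [div_mul_cancel₀ _ hw, Complex.neg_re, Complex.add_re, Complex.ofReal_re,
    Complex.one_re] at hneg
  linarith

theorem mul_inner_add_conj_mul_inner_adjoint_eq_zero {T : E →ₗ[ℂ] E} {W : Submodule ℂ E} {z : ℂ}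
    (hW : ∀ x ∈ W, 0 ≤ (⟪x, (z • T) x⟫_ℂ).re) {x y : E} (hx : x ∈ W) (hy : y ∈ W)
    (hxT : ⟪x, T x⟫_ℂ = 0) : z * ⟪y, T x⟫_ℂ + conj z * ⟪y, T.adjoint x⟫_ℂ = 0 := by
  refine eq_zero_of_forall_nonneg_add_re_mul (q := (z * ⟪y, T y⟫_ℂ).re) fun c => ?_
  convert hW (y + c • x) (W.add_mem hy (W.smul_mem c hx)) using 1
  have hswap : (conj c * (z * ⟪x, T y⟫_ℂ)).re = (c * (conj z * ⟪y, T.adjoint x⟫_ℂ)).re := by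
    rw [LinearMap.adjoint_inner_right, ← inner_conj_symm, ← Complex.conj_re]
    simp only [map_mul, Complex.conj_conj]
  rw [mul_add, Complex.add_re, ← hswap]
  simp only [LinearMap.smul_apply, map_add, map_smul, inner_add_left, inner_add_right,
    inner_smul_left, inner_smul_right, hxT, ← Complex.add_re]
  ring_nf

theorem exists_nonneg_le_orthogonal_span_singleton {T : E →ₗ[ℂ] E} {x u : E} {a b : ℂ}
    (hxu : ⟪x, u⟫_ℂ = 0) (hTx : T x = a • u) (hTx' : T.adjoint x = b • u) {z : ℂ}
    (hz : z * a + conj z * b ≠ 0) {k : ℕ} (h : HasNonnegSubspace (z • T) k) :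
    ∃ W ≤ (ℂ ∙ u)ᗮ, k ≤ Module.finrank ℂ W ∧ ∀ y ∈ W, 0 ≤ (⟪y, (z • T) y⟫_ℂ).re := by
  obtain ⟨W, hk, hW⟩ := h
  have hxTx : ⟪x, T x⟫_ℂ = 0 := by rw [hTx, inner_smul_right, hxu, mul_zero]
  by_cases hxW : x ∈ W
  · refine ⟨W, fun y hy => Submodule.mem_orthogonal_singleton_iff_inner_left.2 ?_, hk, hW⟩
    refine (mul_eq_zero.1 ?_).resolve_left hz
    rw [← mul_inner_add_conj_mul_inner_adjoint_eq_zero hW hxW hy hxTx, hTx, hTx', inner_smul_right,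
      inner_smul_right]
    ring
  · refine ⟨W ⊓ (ℂ ∙ u)ᗮ ⊔ ℂ ∙ x, sup_le inf_le_right ?_, ?_, fun y hy => ?_⟩
    · rwa [Submodule.span_singleton_le_iff_mem, Submodule.mem_orthogonal_singleton_iff_inner_left]
    · rw [Submodule.finrank_sup_span_singleton fun h => hxW (Submodule.mem_inf.1 h).1]
      have hle := finrank_le_finrank_inf_orthogonal_add W (ℂ ∙ u)
      have hone := finrank_span_le_card (R := ℂ) ({u} : Set E)
      rw [Set.toFinset_singleton, Finset.card_singleton] at hone
      omega
    · obtain ⟨y, ⟨hyW, hyu⟩, _, hcx, rfl⟩ := Submodule.mem_sup.1 hy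
      obtain ⟨c, rfl⟩ := Submodule.mem_span_singleton.1 hcx
      obtain ⟨hyTx, hxTy⟩ := inner_apply_eq_zero_of_mem_orthogonal hTx hTx' hyu
      convert hW y hyW using 2
      simp only [LinearMap.smul_apply, map_add, map_smul, inner_add_left, inner_add_right,
        inner_smul_left, inner_smul_right, hyTx, hxTy, hxTx, mul_zero, add_zero]

theorem HasNonnegSubspace.compression_orthogonal {T : E →ₗ[ℂ] E} {x u : E} {a b : ℂ}
    (hx : x ≠ 0) (hxu : ⟪x, u⟫_ℂ = 0) (hTx : T x = a • u) (hTx' : T.adjoint x = b • u) {z : ℂ}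
    (hz : z * a + conj z * b ≠ 0) {k : ℕ} (h : HasNonnegSubspace (z • T) k) :
    HasNonnegSubspace (z • compression T ((ℂ ∙ u)ᗮ ⊓ (ℂ ∙ x)ᗮ)) (k - 1) := by
  obtain ⟨W, hWu, hk, hW⟩ := exists_nonneg_le_orthogonal_span_singleton hxu hTx hTx' hz h
  rw [← compression_smul]
  refine .mono ?_ (hasNonnegSubspace_compression (inf_le_inf_right _ hWu) fun y hy => hW y hy.1)
  have hle := finrank_le_finrank_inf_orthogonal_add W (ℂ ∙ x)
  rw [finrank_span_singleton hx] at hle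
  omega

theorem inner_adjoint_self_eq_zero_iff {T : E →ₗ[ℂ] E} {x : E} :
    ⟪x, T.adjoint x⟫_ℂ = 0 ↔ ⟪x, T x⟫_ℂ = 0 := by
  rw [LinearMap.adjoint_inner_right, inner_eq_zero_symm]

theorem IsPencilEigenvector.exists_compression {T : E →ₗ[ℂ] E} {x : E}
    (h : IsPencilEigenvector T x) (hxT : ⟪x, T x⟫_ℂ = 0) :
    ∃ M : Submodule ℂ E, x ∉ M ∧ (∀ y ∈ M, ⟪y, T x⟫_ℂ = 0 ∧ ⟪x, T y⟫_ℂ = 0) ∧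
      ∀ᶠ z : Circle in cofinite, ∀ k, HasNonnegSubspace ((z : ℂ) • T) k →
        HasNonnegSubspace ((z : ℂ) • compression T M) (k - 1) := by
  obtain ⟨u, a, b, hab, hTx, hTx'⟩ := h.exists_eq_smul
  have hxu : ⟪x, u⟫_ℂ = 0 := by
    have hxT' := inner_adjoint_self_eq_zero_iff.2 hxT
    rw [hTx, inner_smul_right, mul_eq_zero] at hxT
    rw [hTx', inner_smul_right, mul_eq_zero] at hxT'
    exact hab.elim hxT.resolve_left hxT'.resolve_left
  refine ⟨(ℂ ∙ u)ᗮ ⊓ (ℂ ∙ x)ᗮ, fun hx => ?_,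
    fun y hy => inner_apply_eq_zero_of_mem_orthogonal hTx hTx' hy.1, ?_⟩
  · exact h.1 (inner_self_eq_zero.1 (Submodule.mem_orthogonal_singleton_iff_inner_left.1 hx.2))
  · filter_upwards [eventually_cofinite_circle_mul_add_conj_mul_ne_zero hab] with z hz k hk
    exact HasNonnegSubspace.compression_orthogonal h.1 hxu hTx hTx' hz hk

theorem IsPencilEigenvector.of_compression {T : E →ₗ[ℂ] E} {x u : E} {a b : ℂ}
    (hTx : T x = a • u) (hTx' : T.adjoint x = b • u) (hxu : ⟪x, u⟫_ℂ ≠ 0) {y : ↥(ℂ ∙ u)ᗮ}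
    (hy : IsPencilEigenvector (compression T (ℂ ∙ u)ᗮ) y) : IsPencilEigenvector T y := by
  obtain ⟨hy0, α, β, hαβ, hzero⟩ := hy
  refine ⟨by simpa using hy0, α, β, hαβ, ?_⟩
  set w := α • T y + β • T.adjoint y with hw
  have hw_span : w ∈ ℂ ∙ u := by
    rw [← Submodule.orthogonal_orthogonal (ℂ ∙ u), Submodule.mem_orthogonal]
    intro v hv
    have hvzero := congrArg (⟪(⟨v, hv⟩ : ↥(ℂ ∙ u)ᗮ), ·⟫_ℂ) hzero
    simp only [adjoint_compression, inner_zero_right] at hvzero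
    rwa [inner_add_right, inner_smul_right, inner_smul_right, inner_compression, inner_compression,
      ← inner_smul_right, ← inner_smul_right, ← inner_add_right] at hvzero
  obtain ⟨c, hc⟩ := Submodule.mem_span_singleton.1 hw_span
  have hxw : ⟪x, w⟫_ℂ = 0 := by
    have hxTy := (inner_apply_eq_zero_of_mem_orthogonal hTx hTx' y.2).2
    have hxTy' := (inner_apply_eq_zero_of_mem_orthogonal hTx'
      (T.adjoint_adjoint.symm ▸ hTx) y.2).2
    rw [hw, inner_add_right, inner_smul_right, inner_smul_right, hxTy, hxTy', mul_zero, mul_zero,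
      add_zero]
  rw [← hc, inner_smul_right] at hxw
  rw [← hc, (mul_eq_zero.1 hxw).resolve_right hxu, zero_smul]

end

/-! ### Orthogonal families -/

section

variable {E : Type*} [NormedAddCommGroup E] [InnerProductSpace ℂ E]

/-- A family of anisotropic vectors, pairwise orthogonal for the sesquilinear form `⟪x, T y⟫`. The
form is not assumed Hermitian, so orthogonality is required in both orders. -/
def IsOrthogonalFamily {ι : Type*} (T : E →ₗ[ℂ] E) (v : ι → E) : Prop :=
  (∀ i j, i ≠ j → ⟪v i, T (v j)⟫_ℂ = 0) ∧ ∀ i, ⟪v i, T (v i)⟫_ℂ ≠ 0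

theorem linearIndependent_of_inner_apply {ι : Type*} {T : E →ₗ[ℂ] E} {v w : ι → E}
    (h : ∀ i j, i ≠ j → ⟪w i, T (v j)⟫_ℂ = 0) (h' : ∀ i, ⟪w i, T (v i)⟫_ℂ ≠ 0) :
    LinearIndependent ℂ v := by
  refine linearIndependent_iff'.2 fun s c hc i hi => (mul_eq_zero.1 ?_).resolve_right (h' i)
  have hzero : ⟪w i, T (∑ j ∈ s, c j • v j)⟫_ℂ = 0 := by rw [hc, map_zero, inner_zero_right]
  simp only [map_sum, map_smul, inner_sum, inner_smul_right] at hzero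
  rwa [Finset.sum_eq_single_of_mem i hi fun j _ hji => by rw [h i j hji.symm, mul_zero]] at hzero

theorem IsDiagonalCompression.sum_mul_mul_one_add_mul_I {P Q : Type*} [Fintype Q] [DecidableEq P]
    [DecidableEq Q] {p : P → ℝ} {q : Q → ℝ} {K : Matrix Q P ℝ} (hK : IsDiagonalCompression p q K)
    (j l : P) : ∑ i, (K i j * K i l * (1 + q i * Complex.I) : ℂ) =
      (1 : Matrix P P ℂ) j l * (1 + p j * Complex.I) := by
  have hone : (∑ i, K i j * K i l : ℝ) = (1 : Matrix P P ℝ) j l := congrFun₂ hK.1 j l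
  have hdiag : (∑ i, K i j * q i * K i l : ℝ) = diagonal p j l := by
    rw [← hK.2, Matrix.mul_apply]
    simp only [mul_diagonal, transpose_apply]
  calc ∑ i, (K i j * K i l * (1 + q i * Complex.I) : ℂ)
      = (∑ i, K i j * K i l : ℝ) + (∑ i, K i j * q i * K i l : ℝ) * Complex.I := by
        push_cast
        rw [Finset.sum_mul, ← Finset.sum_add_distrib]
        exact Finset.sum_congr rfl fun i _ => by ring
    _ = (1 : Matrix P P ℂ) j l * (1 + p j * Complex.I) := by
        rw [hone, hdiag]
        obtain rfl | hjl := eq_or_ne j l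
        · rw [one_apply_eq, one_apply_eq, diagonal_apply_eq, Complex.ofReal_one, one_mul]
        · rw [one_apply_ne hjl, one_apply_ne hjl, diagonal_apply_ne _ hjl, Complex.ofReal_zero,
            zero_mul, zero_mul, add_zero]

namespace IsOrthogonalFamily

variable {ι κ : Type*} {T : E →ₗ[ℂ] E} {v : ι → E}

theorem linearIndependent (hv : IsOrthogonalFamily T v) : LinearIndependent ℂ v :=
  linearIndependent_of_inner_apply hv.1 hv.2

theorem comp (hv : IsOrthogonalFamily T v) {f : κ → ι} (hf : Function.Injective f) :
    IsOrthogonalFamily T (v ∘ f) :=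
  ⟨fun _ _ hij => hv.1 _ _ (hf.ne hij), fun i => hv.2 (f i)⟩

theorem smul_left (hv : IsOrthogonalFamily T v) {c : ℂ} (hc : c ≠ 0) :
    IsOrthogonalFamily (c • T) v := by
  simp only [IsOrthogonalFamily, LinearMap.smul_apply, inner_smul_right]
  exact ⟨fun i j hij => by rw [hv.1 i j hij, mul_zero], fun i => mul_ne_zero hc (hv.2 i)⟩

theorem smul (hv : IsOrthogonalFamily T v) {c : ι → ℂ} (hc : ∀ i, c i ≠ 0) :
    IsOrthogonalFamily T fun i => c i • v i := by
  simp only [IsOrthogonalFamily, map_smul, inner_smul_left, inner_smul_right]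
  exact ⟨fun i j hij => by rw [hv.1 i j hij, mul_zero, mul_zero],
    fun i => mul_ne_zero (hc i) (mul_ne_zero ((_root_.map_ne_zero _).2 (hc i)) (hv.2 i))⟩

theorem inner_apply_sum_smul [Fintype ι] (hv : IsOrthogonalFamily T v) (c : ι → ℂ) (i : ι) :
    ⟪v i, T (∑ j, c j • v j)⟫_ℂ = c i * ⟪v i, T (v i)⟫_ℂ := by
  simp only [map_sum, map_smul, inner_sum, inner_smul_right]
  exact Finset.sum_eq_single_of_mem i (Finset.mem_univ i) fun j _ hji => by
    rw [hv.1 i j hji.symm, mul_zero]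

theorem inner_sum_smul [Fintype ι] (hv : IsOrthogonalFamily T v) (c d : ι → ℂ) :
    ⟪∑ i, c i • v i, T (∑ i, d i • v i)⟫_ℂ = ∑ i, conj (c i) * d i * ⟪v i, T (v i)⟫_ℂ := by
  simp only [sum_inner, inner_smul_left, hv.inner_apply_sum_smul, mul_assoc]

theorem sum_smul_eq_zero_of_re_neg [Fintype ι] (hv : IsOrthogonalFamily T v)
    (hneg : ∀ i, (⟪v i, T (v i)⟫_ℂ).re < 0) {c : ι → ℂ}
    (hc : 0 ≤ (⟪∑ i, c i • v i, T (∑ i, c i • v i)⟫_ℂ).re) : ∑ i, c i • v i = 0 := by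
  have hre (i : ι) : (conj (c i) * c i * ⟪v i, T (v i)⟫_ℂ).re =
      Complex.normSq (c i) * (⟪v i, T (v i)⟫_ℂ).re := by
    rw [mul_comm (conj _), Complex.mul_conj, Complex.re_ofReal_mul]
  simp only [hv.inner_sum_smul, Complex.re_sum, hre] at hc
  have hle (i : ι) : Complex.normSq (c i) * (⟪v i, T (v i)⟫_ℂ).re ≤ 0 :=
    mul_nonpos_of_nonneg_of_nonpos (Complex.normSq_nonneg _) (hneg i).le
  have hzero := (Finset.sum_eq_zero_iff_of_nonpos fun i _ => hle i).1
    (hc.antisymm' (Finset.sum_nonpos fun i _ => hle i))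
  refine Finset.sum_eq_zero fun i hi => ?_
  rw [Complex.normSq_eq_zero.1 ((mul_eq_zero.1 (hzero i hi)).resolve_right (hneg i).ne), zero_smul]

theorem le_card_of_hasNonnegSubspace [Fintype ι] [FiniteDimensional ℂ E]
    (hv : IsOrthogonalFamily T v) (hι : Fintype.card ι = Module.finrank ℂ E) {k : ℕ}
    (h : HasNonnegSubspace T k) : k ≤ #{i | 0 ≤ (⟪v i, T (v i)⟫_ℂ).re} := by
  classical
  obtain ⟨W, hk, hW⟩ := h
  let u (i : {i // ¬ 0 ≤ (⟪v i, T (v i)⟫_ℂ).re}) : E := v i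
  have hu : IsOrthogonalFamily T u := hv.comp Subtype.val_injective
  have hdisj : Disjoint W (Submodule.span ℂ (Set.range u)) := by
    refine Submodule.disjoint_def.2 fun x hxW hx => ?_
    obtain ⟨c, rfl⟩ := (Submodule.mem_span_range_iff_exists_fun ℂ).1 hx
    exact hu.sum_smul_eq_zero_of_re_neg (fun i => not_le.1 i.2) (hW _ hxW)
  have hle := Submodule.finrank_add_finrank_le_of_disjoint hdisj
  have hcard := Finset.card_filter_add_card_filter_not (s := .univ)
    fun i => 0 ≤ (⟪v i, T (v i)⟫_ℂ).re
  rw [finrank_span_eq_card hu.linearIndependent, Fintype.card_subtype, ← hι] at hle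
  rw [Finset.card_univ] at hcard
  omega

/-- The isotropic subspace is the graph of `K`, which maps the span of the positive vectors
isometrically into that of the negative ones. -/
theorem exists_isIsotropic_of_isDiagonalCompression {P Q : Type*} [Fintype P] [Fintype Q]
    [DecidableEq P] [DecidableEq Q] {v : P ⊕ Q → E} (hv : IsOrthogonalFamily T v) {p : P → ℝ}
    {q : Q → ℝ} (hp : ∀ j, ⟪v (.inl j), T (v (.inl j))⟫_ℂ = 1 + p j * Complex.I)
    (hq : ∀ i, ⟪v (.inr i), T (v (.inr i))⟫_ℂ = -(1 + q i * Complex.I)) {K : Matrix Q P ℝ}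
    (hK : IsDiagonalCompression p q K) :
    ∃ W : Submodule ℂ E, Module.finrank ℂ W = Fintype.card P ∧ IsIsotropic T W := by
  let C : Matrix (P ⊕ Q) P ℂ := fromRows 1 (K.map (↑))
  let g (j : P) : E := ∑ a, C a j • v a
  have hg (j l : P) : ⟪g j, T (g l)⟫_ℂ = 0 := by
    have hone : ∑ a, conj ((1 : Matrix P P ℂ) a j) * (1 : Matrix P P ℂ) a l *
        (1 + p a * Complex.I) = (1 : Matrix P P ℂ) j l * (1 + p j * Complex.I) := by
      rw [Finset.sum_eq_single_of_mem j (Finset.mem_univ j) fun a _ ha => by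
        rw [one_apply_ne ha, map_zero, zero_mul, zero_mul], one_apply_eq, map_one, one_mul]
    rw [hv.inner_sum_smul, Fintype.sum_sum_type]
    simp only [C, fromRows_apply_inl, fromRows_apply_inr, map_apply, hp, hq, Complex.conj_ofReal,
      mul_neg, Finset.sum_neg_distrib]
    rw [hone, hK.sum_mul_mul_one_add_mul_I, add_neg_cancel]
  have hvg (j l : P) :
      ⟪v (.inl j), T (g l)⟫_ℂ = (1 : Matrix P P ℂ) j l * (1 + p j * Complex.I) := by
    rw [hv.inner_apply_sum_smul, hp]
    rfl
  have hli : LinearIndependent ℂ g := by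
    refine linearIndependent_of_inner_apply (T := T) (w := v ∘ .inl) ?_ ?_
    · intro j l hjl
      rw [Function.comp_apply, hvg, one_apply_ne hjl, zero_mul]
    · intro j
      rw [Function.comp_apply, hvg, one_apply_eq, one_mul, ← hp]
      exact hv.2 _
  refine ⟨Submodule.span ℂ (Set.range g), finrank_span_eq_card hli, .span ?_⟩
  rintro _ ⟨j, rfl⟩ _ ⟨l, rfl⟩
  exact hg j l

theorem exists_normalized (hv : IsOrthogonalFamily T v)
    (hre : ∀ i, (⟪v i, T (v i)⟫_ℂ).re ≠ 0) :
    ∃ e : ι → E, IsOrthogonalFamily T e ∧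
      ∀ i, ⟪e i, T (e i)⟫_ℂ = ⟪v i, T (v i)⟫_ℂ / |(⟪v i, T (v i)⟫_ℂ).re| := by
  let r (i : ι) : ℝ := (√|(⟪v i, T (v i)⟫_ℂ).re|)⁻¹
  have hr (i : ι) : r i * r i = |(⟪v i, T (v i)⟫_ℂ).re|⁻¹ := by
    rw [← mul_inv, Real.mul_self_sqrt (abs_nonneg _)]
  refine ⟨fun i => (r i : ℂ) • v i, hv.smul fun i => Complex.ofReal_ne_zero.2 fun h => ?_,
    fun i => ?_⟩
  · exact inv_ne_zero (abs_ne_zero.2 (hre i)) (by rw [← hr, h, mul_zero])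
  · rw [map_smul, inner_smul_left, inner_smul_right, Complex.conj_ofReal, ← mul_assoc,
      ← Complex.ofReal_mul, hr, Complex.ofReal_inv, div_eq_inv_mul]

theorem exists_isIsotropic_of_eventually_card_le [Fintype ι] (hv : IsOrthogonalFamily T v)
    (hre : ∀ i, (⟪v i, T (v i)⟫_ℂ).re ≠ 0)
    (hmin : ∀ᶠ z : Circle in cofinite,
      #{i | 0 < (⟪v i, T (v i)⟫_ℂ).re} ≤ #{i | 0 < ((z : ℂ) * ⟪v i, T (v i)⟫_ℂ).re}) :
    ∃ W : Submodule ℂ E,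
      Module.finrank ℂ W = #{i | 0 < (⟪v i, T (v i)⟫_ℂ).re} ∧ IsIsotropic T W := by
  classical
  obtain ⟨K, hK⟩ := exists_isDiagonalCompression_of_eventually_card_filter_lt_le
    (eventually_card_filter_slope_lt_le hre hmin)
  obtain ⟨e, he, heT⟩ := hv.exists_normalized hre
  have hslope {c : ℂ} (hc : c.re ≠ 0) : c / c.re = 1 + (c.im / c.re : ℝ) * Complex.I := by
    rw [Complex.ofReal_div, div_mul_eq_mul_div, ← div_self (Complex.ofReal_ne_zero.2 hc), ← add_div,
      Complex.re_add_im]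
  rw [← Fintype.card_subtype]
  have hinj : Function.Injective (Sum.elim Subtype.val Subtype.val :
      {i // 0 < (⟪v i, T (v i)⟫_ℂ).re} ⊕ {i // ¬ 0 < (⟪v i, T (v i)⟫_ℂ).re} → ι) :=
    Subtype.val_injective.sumElim Subtype.val_injective fun j i h => i.2 (h ▸ j.2)
  refine (he.comp hinj).exists_isIsotropic_of_isDiagonalCompression (fun j => ?_) (fun i => ?_) hK
  · exact (heT j).trans (by rw [abs_of_pos j.2, hslope (hre j)])
  · refine (heT i).trans ?_
    rw [abs_of_nonpos (not_lt.1 i.2), Complex.ofReal_neg, div_neg, hslope (hre i)]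

theorem exists_isIsotropic [Fintype ι] [FiniteDimensional ℂ E] (hv : IsOrthogonalFamily T v)
    (hι : Fintype.card ι = Module.finrank ℂ E) {k : ℕ}
    (h : ∀ᶠ z : Circle in cofinite, HasNonnegSubspace ((z : ℂ) • T) k) :
    ∃ W : Submodule ℂ E, k ≤ Module.finrank ℂ W ∧ IsIsotropic T W := by
  have hre : ∀ᶠ z : Circle in cofinite, ∀ i, ((z : ℂ) * ⟪v i, T (v i)⟫_ℂ).re ≠ 0 :=
    eventually_all.2 fun i => eventually_cofinite_circle_re_mul_ne_zero (hv.2 i)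
  obtain ⟨z₀, ⟨hz₀, hk⟩, hmin⟩ := exists_and_eventually_cofinite_le (hre.and h)
    fun z : Circle => #{i | 0 < ((z : ℂ) * ⟪v i, T (v i)⟫_ℂ).re}
  have hmin' := (mul_left_injective z₀).tendsto_cofinite.eventually hmin
  simp only [Circle.coe_mul, mul_assoc, ← inner_smul_right (v _) (T _) (z₀ : ℂ),
    ← LinearMap.smul_apply] at hz₀ hmin'
  have hv₀ := hv.smul_left z₀.coe_ne_zero
  obtain ⟨W, hW, hWT⟩ := hv₀.exists_isIsotropic_of_eventually_card_le hz₀ hmin'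
  refine ⟨W, ?_, (isIsotropic_smul_iff z₀.coe_ne_zero).1 hWT⟩
  rw [hW]
  simpa only [(hz₀ _).symm.le_iff_lt] using hv₀.le_card_of_hasNonnegSubspace hι hk

end IsOrthogonalFamily

end

theorem exists_isOrthogonalFamily {E : Type*} [NormedAddCommGroup E] [InnerProductSpace ℂ E]
    [FiniteDimensional ℂ E] {T : E →ₗ[ℂ] E}
    (hT : ∀ x, IsPencilEigenvector T x → ⟪x, T x⟫_ℂ ≠ 0) {n : ℕ} (hn : Module.finrank ℂ E = n) :
    ∃ v : Fin n → E, IsOrthogonalFamily T v := by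
  induction n generalizing E with
  | zero => exact ⟨Fin.elim0, fun i => i.elim0, fun i => i.elim0⟩
  | succ n ih =>
    have : Nontrivial E := Module.nontrivial_of_finrank_eq_succ hn
    obtain ⟨x, hx⟩ := exists_isPencilEigenvector T
    have hxT := hT x hx
    obtain ⟨u, a, b, -, hTx, hTx'⟩ := hx.exists_eq_smul
    have hxu : ⟪x, u⟫_ℂ ≠ 0 := fun h => hxT (by rw [hTx, inner_smul_right, h, mul_zero])
    have hu : u ≠ 0 := fun h => hxu (by rw [h, inner_zero_right])
    have : Fact (Module.finrank ℂ E = n + 1) := ⟨hn⟩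
    obtain ⟨v, hv, hv'⟩ := ih (T := compression T (ℂ ∙ u)ᗮ)
      (fun y hy => by rw [inner_compression]; exact hT y (hy.of_compression hTx hTx' hxu))
      (Submodule.finrank_orthogonal_span_singleton hu)
    have hxv (i : Fin n) := inner_apply_eq_zero_of_mem_orthogonal hTx hTx' (v i).2
    simp only [inner_compression] at hv hv'
    refine ⟨Fin.cons x fun i => v i, fun i j => ?_, Fin.cases hxT hv'⟩
    refine Fin.cases (Fin.cases ?_ ?_ j) (fun i => Fin.cases ?_ ?_ j) i
    · exact fun h => absurd rfl h
    · exact fun j _ => (hxv j).2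
    · exact fun _ => (hxv i).1
    · exact fun j hij => hv i j fun h => hij (congrArg Fin.succ h)

theorem exists_isIsotropic_of_eventually_hasNonnegSubspace {E : Type*} [NormedAddCommGroup E]
    [InnerProductSpace ℂ E] [FiniteDimensional ℂ E] {T : E →ₗ[ℂ] E} {k : ℕ}
    (h : ∀ᶠ z : Circle in cofinite, HasNonnegSubspace ((z : ℂ) • T) k) :
    ∃ W : Submodule ℂ E, k ≤ Module.finrank ℂ W ∧ IsIsotropic T W := by
  induction hn : Module.finrank ℂ E using Nat.strong_induction_on generalizing E k with
  | _ n ih =>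
    by_cases hT : ∀ x, IsPencilEigenvector T x → ⟪x, T x⟫_ℂ ≠ 0
    · obtain ⟨v, hv⟩ := exists_isOrthogonalFamily hT hn
      exact hv.exists_isIsotropic (by rw [Fintype.card_fin, hn]) h
    · push Not at hT
      obtain ⟨x, hx, hxT⟩ := hT
      obtain ⟨M, hxM, hTM, hM⟩ := hx.exists_compression hxT
      have hlt : Module.finrank ℂ M < n :=
        hn ▸ Submodule.finrank_lt fun htop => hxM (htop ▸ Submodule.mem_top)
      obtain ⟨W, hW, hWT⟩ := ih _ hlt (T := compression T M) (k := k - 1)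
        ((h.and hM).mono fun _ hz => hz.2 k hz.1) rfl
      obtain ⟨W', hW', hWT'⟩ := hWT.exists_finrank_eq_add_one hxM hxT hTM
      exact ⟨W', by omega, hWT'⟩

/-! ### The zero-dilation index -/

section

variable {m : Type*} [Fintype m]

theorem inner_toLp_col_toEuclideanLin {κ : Type*} [DecidableEq m] (A : Matrix m m ℂ)
    (V : Matrix m κ ℂ) (i j : κ) :
    ⟪WithLp.toLp 2 (V.col i), toEuclideanLin A (WithLp.toLp 2 (V.col j))⟫_ℂ = (Vᴴ * A * V) i j := by
  rw [Matrix.mul_assoc]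
  exact dotProduct_comm _ _

theorem inner_toLp_col {κ : Type*} (V : Matrix m κ ℂ) (i j : κ) :
    ⟪WithLp.toLp 2 (V.col i), WithLp.toLp 2 (V.col j)⟫_ℂ = (Vᴴ * V) i j :=
  dotProduct_comm _ _

theorem exists_dilation_iff_exists_isIsotropic [DecidableEq m] (A : Matrix m m ℂ) (k : ℕ) :
    (∃ V : Matrix m (Fin k) ℂ, Vᴴ * V = 1 ∧ Vᴴ * A * V = 0) ↔
      ∃ W : Submodule ℂ (EuclideanSpace ℂ m),
        Module.finrank ℂ W = k ∧ IsIsotropic (toEuclideanLin A) W := by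
  constructor
  · rintro ⟨V, hVV, hVAV⟩
    let v (j : Fin k) : EuclideanSpace ℂ m := WithLp.toLp 2 (V.col j)
    have hv : Orthonormal ℂ v := orthonormal_iff_ite.2 fun i j => by
      rw [inner_toLp_col, hVV, one_apply]
    refine ⟨Submodule.span ℂ (Set.range v), ?_, .span ?_⟩
    · rw [finrank_span_eq_card hv.linearIndependent, Fintype.card_fin]
    · rintro _ ⟨i, rfl⟩ _ ⟨j, rfl⟩
      rw [inner_toLp_col_toEuclideanLin, hVAV, Matrix.zero_apply]
  · rintro ⟨W, rfl, hW⟩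
    let b := stdOrthonormalBasis ℂ W
    refine ⟨of fun l j => (b j : EuclideanSpace ℂ m) l, ?_, ?_⟩
    · ext i j
      rw [← inner_toLp_col, one_apply]
      exact orthonormal_iff_ite.1 b.orthonormal i j
    · ext i j
      rw [← inner_toLp_col_toEuclideanLin]
      exact hW _ (b i).2 _ (b j).2

theorem isGreatest_zdi [DecidableEq m] (A : Matrix m m ℂ) :
    IsGreatest {k | ∃ W : Submodule ℂ (EuclideanSpace ℂ m),
      Module.finrank ℂ W = k ∧ IsIsotropic (toEuclideanLin A) W} (zdi A) := by
  simp only [zdi, exists_dilation_iff_exists_isIsotropic]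
  have hbdd : BddAbove {k | ∃ W : Submodule ℂ (EuclideanSpace ℂ m),
      Module.finrank ℂ W = k ∧ IsIsotropic (toEuclideanLin A) W} :=
    ⟨_, fun _ ⟨W, hW, _⟩ => hW ▸ W.finrank_le⟩
  refine ⟨Nat.sSup_mem ⟨0, ⊥, finrank_bot _ _, ?_⟩ hbdd, fun k => le_csSup hbdd⟩
  rintro _ rfl y -
  rw [inner_zero_left]

theorem IsIsotropic.finrank_le_zdi [DecidableEq m] {A : Matrix m m ℂ}
    {W : Submodule ℂ (EuclideanSpace ℂ m)} (hW : IsIsotropic (toEuclideanLin A) W) :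
    Module.finrank ℂ W ≤ zdi A :=
  (isGreatest_zdi A).2 ⟨W, rfl, hW⟩

theorem inner_toEuclideanLin_matRe [DecidableEq m] (A : Matrix m m ℂ) (x y : EuclideanSpace ℂ m) :
    ⟪x, toEuclideanLin (matRe A) y⟫_ℂ =
      2⁻¹ * (⟪x, toEuclideanLin A y⟫_ℂ + conj ⟪y, toEuclideanLin A x⟫_ℂ) := by
  rw [matRe, map_smul, map_add, toEuclideanLin_conjTranspose_eq_adjoint, LinearMap.smul_apply,
    inner_smul_right, LinearMap.add_apply, inner_add_right, LinearMap.adjoint_inner_right,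
    inner_conj_symm]

theorem zdi_le_zdi_matRe_smul (A : Matrix m m ℂ) (c : ℂ) : zdi A ≤ zdi (matRe (c • A)) := by
  classical
  obtain ⟨W, hW, hWA⟩ := (isGreatest_zdi A).1
  refine hW ▸ IsIsotropic.finrank_le_zdi fun x hx y hy => ?_
  rw [inner_toEuclideanLin_matRe, map_smul, LinearMap.smul_apply, LinearMap.smul_apply,
    inner_smul_right, inner_smul_right, hWA x hx y hy, hWA y hy x hx, mul_zero, map_zero, add_zero,
    mul_zero]

theorem hasNonnegSubspace_zdi_matRe [DecidableEq m] (A : Matrix m m ℂ) :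
    HasNonnegSubspace (toEuclideanLin A) (zdi (matRe A)) := by
  obtain ⟨W, hW, hWA⟩ := (isGreatest_zdi (matRe A)).1
  refine ⟨W, hW.ge, fun x hx => ?_⟩
  have hre := hWA x hx x hx
  rw [inner_toEuclideanLin_matRe, Complex.add_conj, Complex.ofReal_mul, Complex.ofReal_ofNat,
    inv_mul_cancel_left₀ two_ne_zero, Complex.ofReal_eq_zero] at hre
  exact hre.ge

theorem le_zdi_of_forall_le_zdi_matRe {A : Matrix m m ℂ} {k : ℕ}
    (h : ∀ θ : ℝ, k ≤ zdi (matRe (Complex.exp (-(θ : ℂ) * Complex.I) • A))) : k ≤ zdi A := by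
  classical
  have hnonneg (z : Circle) : HasNonnegSubspace ((z : ℂ) • toEuclideanLin A) k := by
    have hz : Complex.exp (-((-Complex.arg z : ℝ) : ℂ) * Complex.I) = z := by
      rw [Complex.ofReal_neg, neg_neg, ← Circle.coe_exp, Circle.exp_arg]
    have hle := h (-Complex.arg z)
    rw [hz] at hle
    rw [← map_smul]
    exact (hasNonnegSubspace_zdi_matRe _).mono hle
  obtain ⟨W, hk, hW⟩ := exists_isIsotropic_of_eventually_hasNonnegSubspace (.of_forall hnonneg)
  exact hk.trans hW.finrank_le_zdi

end

theorem zdi_eq_min_zdi_re_general {m : Type*} [Fintype m] (A : Matrix m m ℂ) :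
    ∃ θ₀ : ℝ, zdi A = zdi (matRe (Complex.exp (-(θ₀ : ℂ) * Complex.I) • A)) ∧
      ∀ θ : ℝ, zdi A ≤ zdi (matRe (Complex.exp (-(θ : ℂ) * Complex.I) • A)) := by
  let f (θ : ℝ) : ℕ := zdi (matRe (Complex.exp (-(θ : ℂ) * Complex.I) • A))
  obtain ⟨θ₀, hθ₀⟩ := Nat.sInf_mem (Set.range_nonempty f)
  have hmin (θ : ℝ) : f θ₀ ≤ f θ := hθ₀.trans_le (Nat.sInf_le ⟨θ, rfl⟩)
  exact ⟨θ₀, le_antisymm (zdi_le_zdi_matRe_smul A _) (le_zdi_of_forall_le_zdi_matRe hmin),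
    fun θ => zdi_le_zdi_matRe_smul A _⟩

/-- Corollary 2.4. -/
theorem zdi_eq_min_zdi_re {n : ℕ} (A : Matrix (Fin n) (Fin n) ℂ) :
    ∃ θ₀ : ℝ, zdi A = zdi (matRe (Complex.exp (-(θ₀ : ℂ) * Complex.I) • A)) ∧
      ∀ θ : ℝ, zdi A ≤ zdi (matRe (Complex.exp (-(θ : ℂ) * Complex.I) • A)) :=
  zdi_eq_min_zdi_re_general A
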